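/- arXiv:0907.1095 — 3 statements merged into one kernel-verified Lean document; each statement's English description precedes it below -/
import Mathlib

section
/- Let C ∈ so(q)^p be a nonzero GL_q(ℝ)-distinguished point, i.e. m1(C)·C = rC for some real number r. Then r‖C‖² = ‖m1(C)‖², and consequently r > 0. -/
/-!
Write `M = m1 C`. Since each `Cᵅ` is skew-symmetric, `M = 2 ∑ Cᵅ(Cᵅ)ᵀ` is symmetric, and cyclicity
of the trace gives `⟨M·C, C⟩ = -2 ∑ tr(M (Cᵅ)²) = tr(M²) = ‖M‖²`. Pairing `M·C = rC` with `C`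
therefore yields `r‖C‖² = ‖M‖²`. Moreover `tr M = 2‖C‖²`, so `C ≠ 0` forces `M ≠ 0`; hence
`‖C‖²` and `‖M‖²` are both positive, and so is `r`.
-/


open Matrix BigOperators

/-- The moment map polynomial `m1(C) = -2 ∑ α, (Cᵅ)²`. -/
def m1 {p q : ℕ} (C : Fin p → Matrix (Fin q) (Fin q) ℝ) : Matrix (Fin q) (Fin q) ℝ :=
  (-2 : ℝ) • ∑ α, C α * C α

/-- The inner product on `so(q)^p`: `⟨C,D⟩ = ∑ α, tr(Cᵅ (Dᵅ)ᵀ)`. -/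
def ip {p q : ℕ} (C D : Fin p → Matrix (Fin q) (Fin q) ℝ) : ℝ :=
  ∑ α, (C α * (D α)ᵀ).trace

/-- The Lie algebra action of `gl_q(ℝ)` on `so(q)^p`:
`X · C = (XC¹ + C¹Xᵀ, …, XCᵖ + CᵖXᵀ)`. -/
def glqAct {p q : ℕ} (X : Matrix (Fin q) (Fin q) ℝ)
    (C : Fin p → Matrix (Fin q) (Fin q) ℝ) : Fin p → Matrix (Fin q) (Fin q) ℝ :=
  fun k => X * C k + C k * Xᵀ

lemma trace_mul_transpose_nonneg {q : ℕ} (A : Matrix (Fin q) (Fin q) ℝ) :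
    0 ≤ (A * Aᵀ).trace := by
  simpa using (posSemidef_self_mul_conjTranspose A).trace_nonneg

lemma trace_mul_transpose_pos {q : ℕ} {A : Matrix (Fin q) (Fin q) ℝ} (hA : A ≠ 0) :
    0 < (A * Aᵀ).trace := by
  refine (trace_mul_transpose_nonneg A).lt_of_ne' fun h => hA ?_
  exact trace_mul_conjTranspose_self_eq_zero_iff.1 (by simpa using h)

lemma ip_self_pos {p q : ℕ} {C : Fin p → Matrix (Fin q) (Fin q) ℝ} (hC0 : C ≠ 0) :
    0 < ip C C := by
  obtain ⟨k, hk⟩ := Function.ne_iff.1 hC0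
  exact Finset.sum_pos' (fun α _ => trace_mul_transpose_nonneg (C α))
    ⟨k, Finset.mem_univ k, trace_mul_transpose_pos hk⟩

lemma m1_transpose {p q : ℕ} {C : Fin p → Matrix (Fin q) (Fin q) ℝ}
    (hC : ∀ k, (C k)ᵀ = -(C k)) : (m1 C)ᵀ = m1 C := by
  simp [m1, transpose_sum, hC]

lemma trace_m1 {p q : ℕ} {C : Fin p → Matrix (Fin q) (Fin q) ℝ}
    (hC : ∀ k, (C k)ᵀ = -(C k)) : (m1 C).trace = 2 * ip C C := by
  simp [m1, ip, trace_sum, hC]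

/-- The moment map identity `⟨m1(C)·C, C⟩ = ‖m1(C)‖²`. -/
lemma ip_glqAct_m1 {p q : ℕ} {C : Fin p → Matrix (Fin q) (Fin q) ℝ}
    (hC : ∀ k, (C k)ᵀ = -(C k)) :
    ip (glqAct (m1 C) C) C = (m1 C * (m1 C)ᵀ).trace := by
  have hterm : ∀ α, (glqAct (m1 C) C α * (C α)ᵀ).trace
      = -2 * (m1 C * (C α * C α)).trace := by
    intro α
    have hcyc : (C α * m1 C * C α).trace = (m1 C * (C α * C α)).trace := by
      rw [Matrix.mul_assoc, trace_mul_comm, Matrix.mul_assoc]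
    rw [glqAct, m1_transpose hC, hC, mul_neg, trace_neg, add_mul, trace_add, hcyc,
      Matrix.mul_assoc]
    ring
  rw [m1_transpose hC, ip, Finset.sum_congr rfl fun α _ => hterm α, ← Finset.mul_sum,
    ← trace_sum, ← Finset.mul_sum, ← smul_eq_mul, ← trace_smul, ← mul_smul_comm]
  rfl

/-- Let `C ∈ so(q)^p` be a nonzero `GL_q(ℝ)`-distinguished point, i.e. `m1(C)·C = rC` for
some real number `r`. Then `r‖C‖² = ‖m1(C)‖²`, and consequently `r > 0`. -/
theorem statement4 (p q : ℕ) (hp : 1 ≤ p) (hq : 1 ≤ q)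
    (C : Fin p → Matrix (Fin q) (Fin q) ℝ) (hC : ∀ k, (C k)ᵀ = -(C k))
    (hC0 : C ≠ 0) (r : ℝ)
    (hdist : glqAct (m1 C) C = fun k => r • C k) :
    r * ip C C = (m1 C * (m1 C)ᵀ).trace ∧ 0 < r := by
  have heq : r * ip C C = (m1 C * (m1 C)ᵀ).trace := by
    rw [← ip_glqAct_m1 hC, hdist]
    simp [ip, Finset.mul_sum]
  have hpos := ip_self_pos hC0
  have hm : m1 C ≠ 0 := by
    intro h
    have ht := trace_m1 hC
    rw [h, trace_zero] at ht
    linarith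
  refine ⟨heq, ?_⟩
  have hr := trace_mul_transpose_pos hm
  rw [← heq] at hr
  exact pos_of_mul_pos_left hr hpos.le
end

section
/- Let C ∈ so(q)^p be nonzero and suppose the orbit SL_q(ℝ)·C = { (gC¹gᵀ, …, gCᵖgᵀ) : g ∈ SL_q(ℝ) } is a closed subset of so(q)^p. Then there exist C′ ∈ SL_q(ℝ)·C and r ∈ ℝ with m1(C′) = r·Id_q; in particular m1(C′)·C′ = 2r·C′, so C′ is a GL_q(ℝ)-distinguished point (and the corresponding 2-step nilpotent Lie group admits a trivial Ricci Yang–Mills soliton). -/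
/-!
The argument is the Kempf–Ness principle. On a closed orbit the squared Frobenius norm
`frobSq D = ∑ k, tr (D k * (D k)ᵀ)` attains its minimum, since its sublevel sets are bounded
(`exists_frobSq_min`). At a minimum `D` the first variation along every curve `1 + t X` in `SL_q`
vanishes. It suffices to use the rank-one matrices `X = u vᵀ` with `u ⬝ᵥ v = 0`, for which
`det (1 + t X) = 1`; with `M = ∑ k, D k * D k` the first variation is `-4 tr (X M)`
(`trace_mul_eq_zero_of_min`). Taking `u = e_i`, `v = e_j` shows that the off-diagonal entries of `M`
vanish, and `u = e_i + e_j`, `v = e_i - e_j` shows that its diagonal entries agree, so `M` is a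
scalar matrix (`eq_smul_one_of_trace_vecMulVec`).
-/


open Matrix BigOperators

/-- The squared norm of a tuple of matrices for the inner product `∑ k, tr (A k * (B k)ᵀ)`. -/
def frobSq {p q : ℕ} (D : Fin p → Matrix (Fin q) (Fin q) ℝ) : ℝ :=
  ∑ k, (D k * (D k)ᵀ).trace

theorem frobSq_eq {p q : ℕ} (D : Fin p → Matrix (Fin q) (Fin q) ℝ) :
    frobSq D = ∑ k, ∑ i, ∑ j, D k i j ^ 2 := by
  simp [frobSq, Matrix.trace, Matrix.mul_apply, sq]

theorem sq_entry_le_frobSq {p q : ℕ} (D : Fin p → Matrix (Fin q) (Fin q) ℝ)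
    (k : Fin p) (i j : Fin q) : D k i j ^ 2 ≤ frobSq D := by
  rw [frobSq_eq]
  calc D k i j ^ 2 ≤ ∑ j, D k i j ^ 2 :=
        Finset.single_le_sum (f := fun j => D k i j ^ 2) (fun _ _ => sq_nonneg _)
          (Finset.mem_univ j)
    _ ≤ ∑ i, ∑ j, D k i j ^ 2 :=
        Finset.single_le_sum (f := fun i => ∑ j, D k i j ^ 2)
          (fun _ _ => Finset.sum_nonneg fun _ _ => sq_nonneg _) (Finset.mem_univ i)
    _ ≤ _ :=
        Finset.single_le_sum (f := fun k => ∑ i, ∑ j, D k i j ^ 2)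
          (fun _ _ => Finset.sum_nonneg fun _ _ => Finset.sum_nonneg fun _ _ => sq_nonneg _)
          (Finset.mem_univ k)

theorem continuous_frobSq {p q : ℕ} :
    Continuous (frobSq : (Fin p → Matrix (Fin q) (Fin q) ℝ) → ℝ) := by
  unfold frobSq
  fun_prop

theorem exists_frobSq_min {p q : ℕ} {S : Set (Fin p → Matrix (Fin q) (Fin q) ℝ)}
    (hS : IsClosed S) {C : Fin p → Matrix (Fin q) (Fin q) ℝ} (hC : C ∈ S) :
    ∃ D ∈ S, ∀ E ∈ S, frobSq D ≤ frobSq E := by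
  set R := frobSq C with hR
  have hK : IsCompact (Set.univ.pi fun _ : Fin p => Set.univ.pi fun _ : Fin q =>
      Set.univ.pi fun _ : Fin q => Set.Icc (-√R) √R) :=
    isCompact_univ_pi fun _ => isCompact_univ_pi fun _ => isCompact_univ_pi fun _ => isCompact_Icc
  have hT : IsClosed (S ∩ {D | frobSq D ≤ R}) :=
    hS.inter (isClosed_le continuous_frobSq continuous_const)
  have hcpt : IsCompact (S ∩ {D | frobSq D ≤ R}) := by
    refine hK.of_isClosed_subset hT ?_
    rintro D ⟨-, hD⟩ k - i - j -
    exact abs_le.mp (Real.abs_le_sqrt ((sq_entry_le_frobSq D k i j).trans hD))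
  obtain ⟨D, ⟨hDS, hDR⟩, hmin⟩ :=
    hcpt.exists_isMinOn ⟨C, hC, le_refl R⟩ continuous_frobSq.continuousOn
  refine ⟨D, hDS, fun E hE => ?_⟩
  rcases le_total (frobSq E) R with h | h
  · exact hmin ⟨hE, h⟩
  · exact le_trans hDR h

theorem linear_coeff_eq_zero {a b c d e : ℝ}
    (h : ∀ t : ℝ, a ≤ a + b * t + c * t ^ 2 + d * t ^ 3 + e * t ^ 4) : b = 0 := by
  have hd : HasDerivAt (fun t : ℝ => a + b * t + c * t ^ 2 + d * t ^ 3 + e * t ^ 4) b 0 := by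
    have := ((((hasDerivAt_const (0 : ℝ) a).add ((hasDerivAt_id (0 : ℝ)).const_mul b)).add
      ((hasDerivAt_pow 2 (0 : ℝ)).const_mul c)).add ((hasDerivAt_pow 3 (0 : ℝ)).const_mul d)).add
      ((hasDerivAt_pow 4 (0 : ℝ)).const_mul e)
    exact this.congr_deriv (by simp)
  refine IsLocalMin.hasDerivAt_eq_zero (Filter.Eventually.of_forall fun t => ?_) hd
  simpa using h t

/-- The expansion in `t` of the squared norm of `g * A * gᵀ` for `g = 1 + t X`: it equals
`-tr (S * A * S * A)` with `S = gᵀ * g = 1 + t Y + t² Z`, `Y = X + Xᵀ` and `Z = Xᵀ * X`. Only the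
linear coefficient, the first variation of the norm along `X`, is made explicit. -/
theorem trace_conj_expand {q : ℕ} (X A : Matrix (Fin q) (Fin q) ℝ) (hA : Aᵀ = -A) :
    ∃ c d e : ℝ, ∀ t : ℝ,
      (((1 + t • X) * A * (1 + t • X)ᵀ) * ((1 + t • X) * A * (1 + t • X)ᵀ)ᵀ).trace =
        (A * Aᵀ).trace + (-4 * (X * (A * A)).trace) * t + c * t ^ 2 + d * t ^ 3 + e * t ^ 4 := by
  set Y := X + Xᵀ with hY
  set Z := Xᵀ * X with hZ
  refine ⟨-((Z * A * A).trace + (Y * A * Y * A).trace + (A * Z * A).trace),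
    -((Y * A * Z * A).trace + (Z * A * Y * A).trace), -(Z * A * Z * A).trace, fun t => ?_⟩
  have hS : (1 + t • X)ᵀ * (1 + t • X) = 1 + t • Y + t ^ 2 • Z := by
    simp only [hY, hZ, transpose_add, transpose_one, transpose_smul, add_mul, mul_add, one_mul,
      mul_one, smul_mul_assoc, mul_smul_comm, smul_add, smul_smul, sq]
    abel
  have h1 : (((1 + t • X) * A * (1 + t • X)ᵀ) * ((1 + t • X) * A * (1 + t • X)ᵀ)ᵀ).trace =
      -((1 + t • Y + t ^ 2 • Z) * A * (1 + t • Y + t ^ 2 • Z) * A).trace := by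
    rw [← hS]
    generalize 1 + t • X = G
    have e1 : (G * A * Gᵀ) * (G * A * Gᵀ)ᵀ = -((G * A * Gᵀ * G * A) * Gᵀ) := by
      simp [transpose_mul, hA, mul_assoc]
    rw [e1, trace_neg, Matrix.trace_mul_comm]
    simp only [mul_assoc]
  have hXT : (Xᵀ * (A * A)).trace = (X * (A * A)).trace := by
    rw [← trace_transpose, transpose_mul, transpose_mul, transpose_transpose, hA,
      Matrix.trace_mul_comm]
    simp
  have h2 : (Y * A * A).trace = 2 * (X * (A * A)).trace := by
    rw [hY, mul_assoc, add_mul, trace_add, hXT]; ring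
  have h3 : (A * Y * A).trace = 2 * (X * (A * A)).trace := by
    rw [Matrix.trace_mul_comm, ← mul_assoc, Matrix.trace_mul_comm, ← mul_assoc, h2]
  rw [h1, hA]
  simp only [add_mul, mul_add, one_mul, mul_one, smul_mul_assoc, mul_smul_comm, smul_add,
    smul_smul, trace_add, trace_smul, smul_eq_mul, h2, h3, mul_neg, trace_neg]
  ring

theorem trace_mul_eq_zero_of_min {p q : ℕ} {D : Fin p → Matrix (Fin q) (Fin q) ℝ}
    (hD : ∀ k, (D k)ᵀ = -(D k))
    (hmin : ∀ g : Matrix (Fin q) (Fin q) ℝ, g.det = 1 →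
      frobSq D ≤ frobSq fun k => g * D k * gᵀ)
    (X : Matrix (Fin q) (Fin q) ℝ) (hX : ∀ t : ℝ, (1 + t • X).det = 1) :
    (X * ∑ k, D k * D k).trace = 0 := by
  choose c d e h using fun k => trace_conj_expand X (D k) (hD k)
  have key : ∑ k, (-4 * (X * (D k * D k)).trace) = 0 := by
    refine linear_coeff_eq_zero (a := frobSq D) (c := ∑ k, c k) (d := ∑ k, d k)
      (e := ∑ k, e k) fun t => ?_
    refine (hmin _ (hX t)).trans_eq ?_
    simp only [frobSq, h, Finset.sum_add_distrib, Finset.sum_mul]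
  rw [Finset.mul_sum, trace_sum]
  rw [← Finset.mul_sum] at key
  linarith

theorem eq_smul_one_of_trace_vecMulVec {q : ℕ} (hq : 1 ≤ q) (M : Matrix (Fin q) (Fin q) ℝ)
    (h : ∀ u v : Fin q → ℝ, v ⬝ᵥ u = 0 → (vecMulVec u v * M).trace = 0) :
    ∃ r : ℝ, M = r • (1 : Matrix (Fin q) (Fin q) ℝ) := by
  have hB : ∀ u v : Fin q → ℝ, v ⬝ᵥ u = 0 → (v ᵥ* M) ⬝ᵥ u = 0 := by
    intro u v huv
    have := h u v huv
    rwa [vecMulVec_mul, trace_vecMulVec, dotProduct_comm] at this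
  have hoff : ∀ i j, i ≠ j → M i j = 0 := by
    intro i j hij
    have := hB (Pi.single j 1) (Pi.single i 1) (by simp [hij])
    simpa using this
  have hdiag : ∀ i j, M i i = M j j := by
    intro i j
    by_cases hij : i = j
    · rw [hij]
    have := hB (Pi.single i 1 + Pi.single j 1) (Pi.single i 1 - Pi.single j 1)
      (by simp [hij, Ne.symm hij])
    simp [sub_vecMul, hoff i j hij, hoff j i (Ne.symm hij)] at this
    linarith
  refine ⟨M ⟨0, hq⟩ ⟨0, hq⟩, ?_⟩
  ext i j
  by_cases hij : i = j
  · subst hij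
    simp [hdiag i ⟨0, hq⟩]
  · simp [hij, hoff i j hij]

/-- Let `C ∈ so(q)^p` be nonzero and suppose the orbit
`SL_q(ℝ)·C = { (gC¹gᵀ, …, gCᵖgᵀ) : g ∈ SL_q(ℝ) }` is a closed subset of `so(q)^p`.
Then there exist `C′ ∈ SL_q(ℝ)·C` and `r ∈ ℝ` with `m1(C′) = r·Id_q`; in particular
`m1(C′)·C′ = 2r·C′`, so `C′` is a `GL_q(ℝ)`-distinguished point (and the corresponding
2-step nilpotent Lie group admits a trivial Ricci Yang–Mills soliton). -/
theorem statement8 (p q : ℕ) (hp : 1 ≤ p) (hq : 1 ≤ q)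
    (C : Fin p → Matrix (Fin q) (Fin q) ℝ) (hC : ∀ k, (C k)ᵀ = -(C k))
    (hC0 : C ≠ 0)
    (hclosed : IsClosed {D : Fin p → Matrix (Fin q) (Fin q) ℝ |
      ∃ g : Matrix (Fin q) (Fin q) ℝ, g.det = 1 ∧ D = fun k => g * C k * gᵀ}) :
    ∃ (C' : Fin p → Matrix (Fin q) (Fin q) ℝ) (g : Matrix (Fin q) (Fin q) ℝ) (r : ℝ),
      g.det = 1 ∧ (C' = fun k => g * C k * gᵀ) ∧
      m1 C' = r • (1 : Matrix (Fin q) (Fin q) ℝ) ∧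
      (∀ k, m1 C' * C' k + C' k * (m1 C')ᵀ = (2 * r) • C' k) := by
  obtain ⟨D, ⟨g, hg, rfl⟩, hmin⟩ := exists_frobSq_min hclosed (C := C) ⟨1, by simp, by simp⟩
  have hD : ∀ k, (g * C k * gᵀ)ᵀ = -(g * C k * gᵀ) := fun k => by
    simp [transpose_mul, hC, mul_assoc]
  have htr : ∀ u v : Fin q → ℝ, v ⬝ᵥ u = 0 →
      (vecMulVec u v * ∑ k, (g * C k * gᵀ) * (g * C k * gᵀ)).trace = 0 := by
    intro u v huv
    refine trace_mul_eq_zero_of_min hD (fun x hx => hmin _ ⟨x * g, by simp [hx, hg], ?_⟩) _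
      fun t => ?_
    · funext k
      simp [transpose_mul, mul_assoc]
    · rw [← smul_vecMulVec, vecMulVec_eq Unit, det_one_add_replicateCol_mul_replicateRow]
      simp [huv]
  obtain ⟨r, hr⟩ := eq_smul_one_of_trace_vecMulVec hq _ htr
  have hm : m1 (fun k => g * C k * gᵀ) = (-2 * r) • (1 : Matrix (Fin q) (Fin q) ℝ) := by
    rw [m1, hr, smul_smul]
  refine ⟨_, g, -2 * r, hg, rfl, hm, fun k => ?_⟩
  rw [hm]
  simp only [transpose_smul, transpose_one, smul_mul_assoc, mul_smul_comm, one_mul, mul_one]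
  rw [two_mul, add_smul]
end

section
/- Let C, D ∈ so(q)^p be tuples whose components are each linearly independent in so(q). Then the 2-step nilpotent Lie algebras 𝔑_C and 𝔑_D are isomorphic as Lie algebras if and only if D lies in the orbit GL_q(ℝ)×GL_p(ℝ)·C, i.e. there exist g ∈ GL_q(ℝ) and h ∈ GL_p(ℝ) with D = h·(g·C). -/
/-!
If the components of `C` are linearly independent, the brackets of `𝔑_C` span the whole central
summand `0 ⊕ ℝ^p`, so `[𝔑_C, 𝔑_C] = 0 ⊕ ℝ^p`. Hence an isomorphism `e : 𝔑_C ≃ 𝔑_D` is block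
triangular: it preserves `0 ⊕ ℝ^p` and has invertible diagonal blocks `A` on `ℝ^q` and `B` on `ℝ^p`.
Comparing brackets gives `Aᵀ Dᵏ A = ∑ l, B k l • Cˡ`, which says `D = h·(g·C)` for `g = (Aᵀ)⁻¹` and
`h = Bᵀ`. Conversely, such `g` and `h` give the block diagonal isomorphism `(gᵀ)⁻¹ ⊕ hᵀ`.
-/


open Matrix BigOperators

/-- The bracket on `ℝ^q ⊕ ℝ^p` determined by a tuple `C ∈ so(q)^p` of structure matrices:
`[(x,z),(x′,z′)] = (0, (xᵀC¹x′, …, xᵀCᵖx′))`. -/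
def nilBracket {p q : ℕ} (C : Fin p → Matrix (Fin q) (Fin q) ℝ)
    (u v : (Fin q → ℝ) × (Fin p → ℝ)) : (Fin q → ℝ) × (Fin p → ℝ) :=
  (0, fun k => u.1 ⬝ᵥ (C k).mulVec v.1)

/-- The action of `GL_q(ℝ)` on `so(q)^p`: `g · C = (g C¹ gᵀ, …, g Cᵖ gᵀ)`. -/
def gAct {p q : ℕ} (g : Matrix (Fin q) (Fin q) ℝ)
    (C : Fin p → Matrix (Fin q) (Fin q) ℝ) : Fin p → Matrix (Fin q) (Fin q) ℝ :=
  fun k => g * C k * gᵀ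

/-- The action of `GL_p(ℝ)` on `so(q)^p`: `(h · C)ᵏ = ∑ l, h l k • Cˡ`. -/
def hAct {p q : ℕ} (h : Matrix (Fin p) (Fin p) ℝ)
    (C : Fin p → Matrix (Fin q) (Fin q) ℝ) : Fin p → Matrix (Fin q) (Fin q) ℝ :=
  fun k => ∑ l, h l k • C l

/-- Duality form of the fact that the brackets of `𝔑_C` span the summand `ℝ^p`. -/
lemma functional_eq_zero_of_bracket {p q : ℕ} {C : Fin p → Matrix (Fin q) (Fin q) ℝ}
    (hC : LinearIndependent ℝ C) (φ : (Fin p → ℝ) →ₗ[ℝ] ℝ)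
    (hφ : ∀ x y : Fin q → ℝ, φ (fun k => x ⬝ᵥ (C k).mulVec y) = 0) : φ = 0 := by
  have hsum : ∑ k, φ (Pi.single k 1) • C k = 0 := by
    ext i j
    have := hφ (Pi.single i 1) (Pi.single j 1)
    rw [LinearMap.pi_apply_eq_sum_univ φ] at this
    simp only [Matrix.sum_apply, Matrix.smul_apply, Matrix.zero_apply, smul_eq_mul]
    rw [← this]
    refine Finset.sum_congr rfl fun k _ => ?_
    have hs : (fun j => if k = j then (1 : ℝ) else 0) = Pi.single k 1 := by
      ext j; simp [Pi.single_apply, eq_comm]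
    rw [hs]
    simp [mul_comm]
  have h0 := Fintype.linearIndependent_iff.mp hC _ hsum
  refine LinearMap.pi_ext' fun k => ?_
  ext
  simpa using h0 k

/-- A bracket-preserving linear map out of `𝔑_C` sends the derived algebra `0 ⊕ ℝ^p` into
`0 ⊕ ℝ^p`. -/
lemma fst_map_derived_eq_zero {p q : ℕ} {C D : Fin p → Matrix (Fin q) (Fin q) ℝ}
    (hC : LinearIndependent ℝ C)
    (e : ((Fin q → ℝ) × (Fin p → ℝ)) →ₗ[ℝ] ((Fin q → ℝ) × (Fin p → ℝ)))
    (he : ∀ u v, e (nilBracket C u v) = nilBracket D (e u) (e v)) (z : Fin p → ℝ) :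
    (e (0, z)).1 = 0 := by
  ext i
  have := functional_eq_zero_of_bracket hC
    (LinearMap.proj i ∘ₗ LinearMap.fst ℝ _ _ ∘ₗ e ∘ₗ LinearMap.inr ℝ _ _) (fun x y => by
      have h := congrArg (fun w => w.1 i) (he (x, 0) (y, 0))
      simpa [nilBracket] using h)
  simpa using LinearMap.congr_fun this z

lemma isUnit_det_toMatrix' {n : ℕ} (f : (Fin n → ℝ) →ₗ[ℝ] (Fin n → ℝ))
    (hf : ∀ x, f x = 0 → x = 0) : IsUnit (LinearMap.toMatrix' f).det := by
  have hinj : Function.Injective f := (injective_iff_map_eq_zero f).mpr hf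
  rw [LinearMap.det_toMatrix']
  exact (LinearEquiv.ofInjectiveEndo f hinj).isUnit_det'

/-- The invertible congruence matrix `A` may be moved to the other side of
`Aᵀ Dᵏ A = ∑ l, h l k • Cˡ`, where it becomes the action of `g = (Aᵀ)⁻¹`. -/
lemma eq_hAct_gAct {p q : ℕ} {C D : Fin p → Matrix (Fin q) (Fin q) ℝ}
    (A : Matrix (Fin q) (Fin q) ℝ) (h : Matrix (Fin p) (Fin p) ℝ) (hA : IsUnit A.det)
    (H : ∀ k, Aᵀ * D k * A = ∑ l, h l k • C l) : D = hAct h (gAct (Aᵀ)⁻¹ C) := by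
  funext k
  have hAt : IsUnit (Aᵀ).det := by rwa [Matrix.det_transpose]
  have h1 : hAct h (gAct (Aᵀ)⁻¹ C) k = (Aᵀ)⁻¹ * (∑ l, h l k • C l) * A⁻¹ := by
    simp [hAct, gAct, Finset.mul_sum, Finset.sum_mul, Matrix.transpose_nonsing_inv]
  rw [h1, ← H k, Matrix.mul_assoc Aᵀ, Matrix.nonsing_inv_mul_cancel_left _ _ hAt,
    Matrix.mul_nonsing_inv_cancel_right _ _ hA]

/-- Let `C, D ∈ so(q)^p` be tuples whose components are each linearly independent in
`so(q)`.  Then the 2-step nilpotent Lie algebras `𝔑_C` and `𝔑_D` are isomorphic as Lie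
algebras if and only if `D` lies in the orbit `GL_q(ℝ)×GL_p(ℝ)·C`, i.e. there exist
`g ∈ GL_q(ℝ)` and `h ∈ GL_p(ℝ)` with `D = h·(g·C)`. -/
theorem statement12 (p q : ℕ) (hp : 1 ≤ p) (hq : 1 ≤ q)
    (C D : Fin p → Matrix (Fin q) (Fin q) ℝ)
    (hC : ∀ k, (C k)ᵀ = -(C k)) (hD : ∀ k, (D k)ᵀ = -(D k))
    (hCind : LinearIndependent ℝ C) (hDind : LinearIndependent ℝ D) :
    (∃ e : ((Fin q → ℝ) × (Fin p → ℝ)) ≃ₗ[ℝ] ((Fin q → ℝ) × (Fin p → ℝ)),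
      ∀ u v, e (nilBracket C u v) = nilBracket D (e u) (e v)) ↔
    (∃ (g : Matrix (Fin q) (Fin q) ℝ) (h : Matrix (Fin p) (Fin p) ℝ),
      IsUnit g.det ∧ IsUnit h.det ∧ D = hAct h (gAct g C)) := by
  constructor
  · rintro ⟨e, he⟩
    have hz := fst_map_derived_eq_zero hCind e.toLinearMap he
    have hz' := fst_map_derived_eq_zero (C := D) (D := C) hDind e.symm.toLinearMap (fun u v => by
      apply e.injective
      simp [he])
    simp only [LinearEquiv.coe_coe] at hz hz'
    let a : (Fin q → ℝ) →ₗ[ℝ] (Fin q → ℝ) :=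
      LinearMap.fst ℝ _ _ ∘ₗ e.toLinearMap ∘ₗ LinearMap.inl ℝ _ _
    let b : (Fin p → ℝ) →ₗ[ℝ] (Fin p → ℝ) :=
      LinearMap.snd ℝ _ _ ∘ₗ e.toLinearMap ∘ₗ LinearMap.inr ℝ _ _
    have ha : ∀ x, a x = (e (x, 0)).1 := fun x => rfl
    have hb : ∀ z, b z = (e (0, z)).2 := fun z => rfl
    have hau := isUnit_det_toMatrix' a (fun x hx => by
      have h1 : e (x, 0) = (0, (e (x, 0)).2) := Prod.ext (by rw [← ha, hx]) rfl
      have h2 := hz' (e (x, 0)).2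
      rw [← h1, e.symm_apply_apply] at h2
      exact h2)
    have hbu := isUnit_det_toMatrix' b (fun z h => by
      have h1 : e (0, z) = 0 := Prod.ext (hz z) (by rw [← hb, h]; rfl)
      have h2 := e.map_eq_zero_iff.mp h1
      exact congrArg Prod.snd h2)
    refine ⟨((LinearMap.toMatrix' a)ᵀ)⁻¹, (LinearMap.toMatrix' b)ᵀ, ?_, ?_, ?_⟩
    · exact Matrix.isUnit_nonsing_inv_det _ (by rwa [Matrix.det_transpose])
    · rwa [Matrix.det_transpose]
    · refine eq_hAct_gAct _ _ hau fun k => ?_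
      -- Both sides are compared as bilinear forms on the standard basis.
      ext i j
      have h := congrArg (fun w => w.2 k)
        (he (Pi.single i 1, 0) (Pi.single j 1, 0))
      simp only [nilBracket, ← ha] at h
      rw [← hb, ← LinearMap.toMatrix'_mulVec b, ← LinearMap.toMatrix'_mulVec a,
        ← LinearMap.toMatrix'_mulVec a] at h
      have hl : ((LinearMap.toMatrix' a)ᵀ * D k * LinearMap.toMatrix' a) i j =
          (LinearMap.toMatrix' a *ᵥ Pi.single i 1) ⬝ᵥ
            (D k *ᵥ (LinearMap.toMatrix' a *ᵥ Pi.single j 1)) := by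
        rw [Matrix.mul_assoc, Matrix.mul_apply, Matrix.mulVec_mulVec]
        simp [dotProduct]
      rw [hl, ← h]
      simp [Matrix.mulVec, dotProduct, Matrix.sum_apply, Pi.single_apply]
  · rintro ⟨g, h, hg, hh, rfl⟩
    have hgt : IsUnit ((gᵀ)⁻¹).det :=
      Matrix.isUnit_nonsing_inv_det _ (by rwa [Matrix.det_transpose])
    have hht : IsUnit (hᵀ).det := by rwa [Matrix.det_transpose]
    refine ⟨(Matrix.toLinearEquiv' (gᵀ)⁻¹ (Matrix.invertibleOfIsUnitDet _ hgt)).prodCongr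
      (Matrix.toLinearEquiv' hᵀ (Matrix.invertibleOfIsUnitDet _ hht)), fun u v => ?_⟩
    have key : ∀ l, ((gᵀ)⁻¹ *ᵥ u.1) ⬝ᵥ ((g * C l * gᵀ) *ᵥ ((gᵀ)⁻¹ *ᵥ v.1)) =
        u.1 ⬝ᵥ (C l *ᵥ v.1) := fun l => by
      rw [Matrix.mulVec_mulVec, Matrix.mul_nonsing_inv_cancel_right _ _
        (by rwa [Matrix.det_transpose]), ← Matrix.transpose_nonsing_inv,
        Matrix.mulVec_transpose, ← Matrix.dotProduct_mulVec, Matrix.mulVec_mulVec,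
        Matrix.nonsing_inv_mul_cancel_left _ _ hg]
    refine Prod.ext ?_ ?_
    · simp [nilBracket]
    · ext k
      change (hᵀ *ᵥ fun l => u.1 ⬝ᵥ (C l *ᵥ v.1)) k =
        ((gᵀ)⁻¹ *ᵥ u.1) ⬝ᵥ (hAct h (gAct g C) k *ᵥ ((gᵀ)⁻¹ *ᵥ v.1))
      simp only [hAct, gAct, Matrix.sum_mulVec, Matrix.smul_mulVec, dotProduct_sum,
        dotProduct_smul, key]
      simp [Matrix.mulVec, dotProduct]
end
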